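/- arXiv:1401.3636 — 2 statements merged into one kernel-verified Lean document; each statement's English description precedes it below -/
import Mathlib

section
/- Let x be a real number and let a be a complex number such that a+3/2 and a+2 are not nonpositive integers or zero. Then Σ_{k=0}^∞ (x/4)^{2k} H_{2k+1}(x/2) / ((a+3/2)_k k!) = x · e^{x²/4} · Σ_{k=0}^∞ (a/2+1)_k (a/2+3/2)_k (−x²)^k / ((a+3/2)_k (a+2)_k k!). -/
/-- The Pochhammer symbol `(a)_k = a (a+1) ⋯ (a+k-1)`. -/
noncomputable def poch (a : ℂ) (k : ℕ) : ℂ := Polynomial.eval a (ascPochhammer ℂ k)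

/-- The physicists' Hermite polynomial `H_n(t) = (-1)^n e^{t²} (d/dt)^n e^{-t²}`. -/
noncomputable def physHermite (n : ℕ) (t : ℝ) : ℝ :=
  (-1 : ℝ) ^ n * Real.exp (t ^ 2) * iteratedDeriv n (fun s => Real.exp (-(s ^ 2))) t

/-!
The operator `s^n (d/ds)^n` is diagonal on monomials. Applied to the power series of the
derivative of `e^{-s²}`, it expands `e^{-z²} z^{2k} H_{2k+1}(z)` in powers of `z`. Inserting this
in the left-hand side gives an absolutely convergent double series; in the other order of summation
each inner sum is a terminating `₂F₁` at `1`, which the Chu–Vandermonde identity evaluates.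
-/

section PowerSeries

variable {𝕜 : Type*} [NontriviallyNormedField 𝕜]

theorem hasFPowerSeriesOnBall_ofScalars_of_forall_hasSum {a : ℕ → 𝕜} {f : 𝕜 → 𝕜}
    (h : ∀ s, HasSum (fun k => a k * s ^ k) (f s)) :
    HasFPowerSeriesOnBall f (FormalMultilinearSeries.ofScalars 𝕜 a) 0 ⊤ where
  r_le := by
    refine (ENNReal.eq_top_of_forall_nnreal_le fun r => ?_).ge
    obtain ⟨s, hs⟩ := NormedField.exists_lt_norm 𝕜 r
    refine le_trans (mod_cast hs.le : (r : ENNReal) ≤ ‖s‖₊)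
      (FormalMultilinearSeries.le_radius_of_tendsto _ (l := 0) ?_)
    simpa [FormalMultilinearSeries.ofScalars_norm] using (h s).summable.tendsto_atTop_zero.norm
  r_pos := ENNReal.zero_lt_top
  hasSum := fun {s} _ => by
    simpa [FormalMultilinearSeries.ofScalars_apply_eq, mul_comm] using h s

variable [CompleteSpace 𝕜]

theorem contDiff_of_forall_hasSum {a : ℕ → 𝕜} {f : 𝕜 → 𝕜}
    (h : ∀ s, HasSum (fun k => a k * s ^ k) (f s)) (n : WithTop ℕ∞) : ContDiff 𝕜 n f := by
  refine AnalyticOnNhd.contDiff fun s _ => ?_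
  exact (hasFPowerSeriesOnBall_ofScalars_of_forall_hasSum h).analyticAt_of_mem (by simp)

theorem hasSum_mul_deriv_of_forall_hasSum {a : ℕ → 𝕜} {f : 𝕜 → 𝕜}
    (h : ∀ s, HasSum (fun k => a k * s ^ k) (f s)) (s : 𝕜) :
    HasSum (fun k : ℕ => k * a k * s ^ k) (s * deriv f s) := by
  have hderiv := (hasFPowerSeriesOnBall_ofScalars_of_forall_hasSum h).fderiv.hasSum (y := s)
    (by simp)
  have hdiag := hderiv.mapL (ContinuousLinearMap.apply 𝕜 𝕜 s)
  refine (hasSum_nat_add_iff' 1).1 ?_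
  simp only [ContinuousLinearMap.apply_apply, FormalMultilinearSeries.derivSeries_apply_diag,
    FormalMultilinearSeries.ofScalars_apply_eq, zero_add, nsmul_eq_mul, smul_eq_mul,
    fderiv_eq_smul_deriv] at hdiag
  simpa [mul_assoc] using hdiag

theorem hasSum_pow_mul_iteratedDeriv_of_forall_hasSum {a : ℕ → 𝕜} {f : 𝕜 → 𝕜}
    (h : ∀ s, HasSum (fun k => a k * s ^ k) (f s)) (n : ℕ) (s : 𝕜) :
    HasSum (fun k : ℕ => k.descFactorial n * a k * s ^ k) (s ^ n * iteratedDeriv n f s) := by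
  induction n generalizing s with
  | zero => simpa using h s
  | succ n ih =>
    have hdiff : DifferentiableAt 𝕜 (iteratedDeriv n f) s :=
      (contDiff_of_forall_hasSum h (n + 1)).differentiable_iteratedDeriv' n s
    have heuler : s * deriv (fun s => s ^ n * iteratedDeriv n f s) s -
        n * (s ^ n * iteratedDeriv n f s) = s ^ (n + 1) * iteratedDeriv (n + 1) f s := by
      rw [deriv_fun_mul (by fun_prop) hdiff, deriv_pow_field, iteratedDeriv_succ]
      cases n with
      | zero => simp
      | succ n => push_cast; ring
    have hcoeff (k : ℕ) : (k.descFactorial (n + 1) : 𝕜) = (k - n) * k.descFactorial n := by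
      rcases le_or_gt n k with hnk | hkn
      · rw [Nat.descFactorial_succ, Nat.cast_mul, Nat.cast_sub hnk]
      · simp [Nat.descFactorial_of_lt hkn]
    have hsub := (hasSum_mul_deriv_of_forall_hasSum ih s).sub ((ih s).mul_left (n : 𝕜))
    rw [heuler] at hsub
    simpa only [hcoeff, sub_mul, mul_assoc] using hsub

theorem hasSum_pow_mul_iteratedDeriv_of_forall_hasSum_comp {ι : Type*} {e : ι → ℕ}
    (he : e.Injective) {c : ι → 𝕜} {f : 𝕜 → 𝕜} (h : ∀ s, HasSum (fun i => c i * s ^ e i) (f s))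
    (n : ℕ) (s : 𝕜) :
    HasSum (fun i => (e i).descFactorial n * c i * s ^ e i) (s ^ n * iteratedDeriv n f s) := by
  have hext (i : ι) : Function.extend e c 0 (e i) = c i := he.extend_apply c 0 i
  have hzero (k : ℕ) (hk : k ∉ Set.range e) : Function.extend e c 0 k = 0 :=
    Function.extend_apply' _ _ _ hk
  have hf (s : 𝕜) : HasSum (fun k => Function.extend e c 0 k * s ^ k) (f s) :=
    (he.hasSum_iff fun k hk => by rw [hzero k hk, zero_mul]).1 <| by
      simpa only [Function.comp_def, hext] using h s
  have hiter := (he.hasSum_iff fun k hk => by rw [hzero k hk, mul_zero, zero_mul]).2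
    (hasSum_pow_mul_iteratedDeriv_of_forall_hasSum hf n s)
  simpa only [Function.comp_def, hext] using hiter

end PowerSeries

section Pochhammer

open Polynomial Finset

theorem ascPochhammer_eval_two_mul {K : Type*} [Field K] [NeZero (2 : K)] (b : K) (k : ℕ) :
    (ascPochhammer K (2 * k)).eval (2 * b) =
      4 ^ k * ((ascPochhammer K k).eval b * (ascPochhammer K k).eval (b + 1 / 2)) := by
  induction k with
  | zero => simp
  | succ k ih =>
    simp only [mul_add_one, ascPochhammer_succ_eval, ih]
    push_cast
    field

theorem descFactorial_two_mul_add_one {K : Type*} [Field K] [CharZero K] (j k : ℕ) :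
    ((2 * j + 1).descFactorial (2 * k) : K) =
      4 ^ k * k.factorial * (j.choose k * (descPochhammer K k).eval (j + 1 / 2 : K)) := by
  have h := ascPochhammer_eval_two_mul (j - k + 1 : K) k
  rw [show (2 * (j - k + 1) : K) = (2 * j + 1 : ℕ) - (2 * k : ℕ) + 1 by push_cast; ring,
    show (j - k + 1 + 1 / 2 : K) = j + 1 / 2 - k + 1 by ring,
    ← descPochhammer_eval_eq_ascPochhammer, ← descPochhammer_eval_eq_ascPochhammer,
    ← descPochhammer_eval_eq_ascPochhammer, descPochhammer_eval_eq_descFactorial,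
    descPochhammer_eval_eq_descFactorial, Nat.descFactorial_eq_factorial_mul_choose j] at h
  rw [h]
  push_cast
  ring

theorem ascPochhammer_eval_add_mul {R : Type*} [CommSemiring R] (c : R) (m n : ℕ) :
    (ascPochhammer R m).eval c * (ascPochhammer R n).eval (c + m) =
      (ascPochhammer R (m + n)).eval c := by
  rw [← ascPochhammer_mul]
  simp

theorem sum_choose_mul_descPochhammer_div_ascPochhammer {K : Type*} [Field K] (b : K) {c : K}
    (n : ℕ) (hc : (ascPochhammer K n).eval c ≠ 0) :
    ∑ k ∈ range (n + 1), n.choose k * (descPochhammer K k).eval b / (ascPochhammer K k).eval c =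
      (ascPochhammer K n).eval (c + b) / (ascPochhammer K n).eval c := by
  have h := Ring.descPochhammer_smeval_add n (Commute.all b (c + n - 1))
  simp only [descPochhammer_smeval_eq_ascPochhammer, ascPochhammer_smeval_eq_eval] at h
  rw [show b + (c + n - 1) - n + 1 = c + b by ring, Nat.sum_antidiagonal_eq_sum_range_succ_mk] at h
  rw [h, sum_div]
  refine sum_congr rfl fun k hk => ?_
  obtain ⟨m, rfl⟩ := Nat.exists_eq_add_of_le (mem_range_succ_iff.1 hk)
  have hsplit := ascPochhammer_eval_add_mul c k m
  rw [← hsplit] at hc ⊢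
  have hck := left_ne_zero_of_mul hc
  have hckm := right_ne_zero_of_mul hc
  rw [Nat.add_sub_cancel_left, descPochhammer_eval_eq_ascPochhammer,
    show c + (k + m : ℕ) - 1 - m + 1 = c + k by push_cast; ring]
  field

theorem exists_norm_factorial_div_ascPochhammer_le {𝕜 : Type*} [RCLike 𝕜] {c : 𝕜}
    (hc : ∀ n : ℕ, c ≠ -n) :
    ∃ C, ∀ k, ‖(k.factorial : 𝕜) / (ascPochhammer 𝕜 k).eval c‖ ≤ C * 2 ^ k := by
  have hrad : ((1 / 2 : NNReal) : ENNReal) < (ordinaryHypergeometricSeries 𝕜 1 1 c).radius := by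
    have hone (n : ℕ) : (n : 𝕜) ≠ -1 := fun h =>
      n.cast_add_one_ne_zero (eq_neg_iff_add_eq_zero.1 h)
    rw [ordinaryHypergeometricSeries_radius_eq_one 𝕜 1 1 c fun n =>
      ⟨hone n, hone n, fun h => hc n (by simp [h])⟩]
    norm_num
  obtain ⟨C, -, hle⟩ := FormalMultilinearSeries.norm_mul_pow_le_of_lt_radius _ hrad
  refine ⟨C, fun k => ?_⟩
  rw [← div_le_iff₀ (by positivity), norm_div, RCLike.norm_natCast]
  simpa [ordinaryHypergeometricSeries, div_eq_mul_inv] using hle k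

end Pochhammer

section Hermite

open Finset
open scoped Nat

theorem hasSum_pow_mul_physHermite_succ (n : ℕ) (z : ℝ) :
    HasSum (fun j : ℕ => (2 * j + 1).descFactorial n * (2 * z * (-z ^ 2) ^ j / j !))
      ((-1) ^ n * Real.exp (-z ^ 2) * (z ^ n * physHermite (n + 1) z)) := by
  have hderiv (s : ℝ) : deriv (fun s => Real.exp (-(s ^ 2))) s = -(2 * s) * Real.exp (-s ^ 2) := by
    simp [mul_comm]
  have hterm (s : ℝ) (j : ℕ) :
      -(2 * s) * ((-s ^ 2) ^ j / j !) = -2 * (-1) ^ j / j ! * s ^ (2 * j + 1) := by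
    rw [neg_pow]
    ring
  have hseries (s : ℝ) : HasSum (fun j : ℕ => -2 * (-1) ^ j / j ! * s ^ (2 * j + 1))
      (deriv (fun s => Real.exp (-(s ^ 2))) s) := by
    rw [hderiv, Real.exp_eq_exp_ℝ]
    have hexp := (NormedSpace.expSeries_div_hasSum_exp (-s ^ 2)).mul_left (-(2 * s))
    simp only [hterm] at hexp
    exact hexp
  have hinj : Function.Injective fun j : ℕ => 2 * j + 1 := fun i j h => by simpa using h
  have hvalue : (-1) ^ n * Real.exp (-z ^ 2) * (z ^ n * physHermite (n + 1) z) =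
      -(z ^ n * iteratedDeriv n (deriv fun s => Real.exp (-(s ^ 2))) z) := by
    rw [physHermite, iteratedDeriv_succ', pow_succ, Real.exp_neg]
    field_simp
    rcases neg_one_pow_eq_or ℝ n with h | h <;> simp [h, pow_succ]
  have hsum := (hasSum_pow_mul_iteratedDeriv_of_forall_hasSum_comp hinj hseries n z).neg
  simp only [mul_assoc, ← hterm] at hsum
  rw [hvalue]
  simpa only [neg_mul, mul_neg, neg_neg, mul_assoc, mul_div_assoc] using hsum

theorem poch_ne_zero {c : ℂ} (hc : ∀ n : ℕ, c ≠ -n) (k : ℕ) : poch c k ≠ 0 := fun h =>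
  have ⟨n, _, hn⟩ := (ascPochhammer_eval_eq_zero_iff k c).1 h
  hc n (neg_eq_iff_eq_neg.1 hn.symm)

theorem poch_half_mul_poch_half (b : ℂ) (k : ℕ) :
    poch (b / 2) k * poch (b / 2 + 1 / 2) k * 4 ^ k = poch b k * poch (b + k) k := by
  have h := ascPochhammer_eval_two_mul (b / 2) k
  rw [mul_div_cancel₀ b two_ne_zero, two_mul, ← ascPochhammer_eval_add_mul] at h
  rw [mul_comm, poch, poch, poch, poch, h]

theorem poch_add_mul_neg_div_four_pow_div {a : ℂ} (ha : ∀ n : ℕ, a + 2 ≠ -(n : ℂ)) (c y : ℂ)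
    (k : ℕ) :
    poch (a + 2 + k) k * (-(y / 4)) ^ k / (poch c k * k !) =
      poch (a / 2 + 1) k * poch (a / 2 + 3 / 2) k * (-y) ^ k /
        (poch c k * poch (a + 2) k * k !) := by
  have hdup := poch_half_mul_poch_half (a + 2) k
  rw [show (a + 2) / 2 = a / 2 + 1 by ring, show a / 2 + 1 + 1 / 2 = a / 2 + 3 / 2 by ring] at hdup
  have hne := poch_ne_zero ha k
  rw [show -y = 4 * (-(y / 4)) by ring, mul_pow, ← mul_assoc, hdup]
  field

/-- The `(j, k)` term of the double series obtained by expanding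
`z ^ (2 * k) * physHermite (2 * k + 1) z`, with `y = z ^ 2`, in powers of `y` inside the odd
Hermite series with denominator parameter `c`. The common factor `2 * z * exp (z ^ 2)` is left
out. -/
noncomputable def hermiteDoubleTerm (c y : ℂ) (j k : ℕ) : ℂ :=
  (2 * j + 1).descFactorial (2 * k) / (4 ^ k * k ! * poch c k) * ((-y) ^ j / j !)

theorem hasSum_mul_hermiteDoubleTerm_fst (c : ℂ) (x : ℝ) (k : ℕ) :
    HasSum (fun j => x * Complex.exp (x ^ 2 / 4) * hermiteDoubleTerm c (x ^ 2 / 4) j k)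
      (((x / 4) ^ (2 * k) * physHermite (2 * k + 1) (x / 2) : ℝ) / (poch c k * k !)) := by
  have hexp : Complex.exp (x ^ 2 / 4) * Complex.exp (-(x / 2) ^ 2) = 1 := by
    rw [← Complex.exp_add, show (x ^ 2 / 4 + -(x / 2) ^ 2 : ℂ) = 0 by ring, Complex.exp_zero]
  have hterm (j : ℕ) : x * Complex.exp (x ^ 2 / 4) * hermiteDoubleTerm c (x ^ 2 / 4) j k =
      Complex.exp (x ^ 2 / 4) / (4 ^ k * k ! * poch c k) * ((((2 * j + 1).descFactorial (2 * k) *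
        (2 * (x / 2) * (-(x / 2) ^ 2) ^ j / j !) : ℝ)) : ℂ) := by
    rw [hermiteDoubleTerm]
    push_cast
    ring
  have hvalue : (((x / 4) ^ (2 * k) * physHermite (2 * k + 1) (x / 2) : ℝ) : ℂ) /
      (poch c k * k !) = Complex.exp (x ^ 2 / 4) / (4 ^ k * k ! * poch c k) *
        (((-1) ^ (2 * k) * Real.exp (-(x / 2) ^ 2) *
          ((x / 2) ^ (2 * k) * physHermite (2 * k + 1) (x / 2)) : ℝ) : ℂ) := by
    push_cast
    have hpow : ((x / 4) ^ (2 * k) : ℂ) = (x / 2) ^ (2 * k) / 4 ^ k := by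
      rw [pow_mul, pow_mul, ← div_pow]
      ring
    rw [(even_two_mul k).neg_one_pow, hpow]
    linear_combination
      -((x / 2) ^ (2 * k) * physHermite (2 * k + 1) (x / 2) / (4 ^ k * k ! * poch c k)) * hexp
  simp only [hterm, hvalue]
  exact (Complex.hasSum_ofReal.2
    (hasSum_pow_mul_physHermite_succ (2 * k) (x / 2))).mul_left _

theorem hasSum_hermiteDoubleTerm_snd {c : ℂ} (hc : ∀ n : ℕ, c ≠ -n) (y : ℂ) (j : ℕ) :
    HasSum (hermiteDoubleTerm c y j)
      (poch (c + 1 / 2 + j) j * (-y) ^ j / (poch c j * j !)) := by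
  have hzero (k : ℕ) (hk : k ∉ range (j + 1)) : hermiteDoubleTerm c y j k = 0 := by
    rw [mem_range_succ_iff, not_le] at hk
    simp [hermiteDoubleTerm, Nat.descFactorial_of_lt (show 2 * j + 1 < 2 * k by lia)]
  have hterm (k : ℕ) : hermiteDoubleTerm c y j k =
      j.choose k * (descPochhammer ℂ k).eval (j + 1 / 2 : ℂ) / poch c k * ((-y) ^ j / j !) := by
    rw [hermiteDoubleTerm, descFactorial_two_mul_add_one,
      mul_div_mul_left _ _ (by simp [Nat.factorial_ne_zero])]
  have hvandermonde :
      ∑ k ∈ range (j + 1), j.choose k * (descPochhammer ℂ k).eval (j + 1 / 2 : ℂ) / poch c k =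
        poch (c + 1 / 2 + j) j / poch c j := by
    rw [show c + 1 / 2 + j = c + (j + 1 / 2) by ring]
    exact sum_choose_mul_descPochhammer_div_ascPochhammer _ j (poch_ne_zero hc j)
  have hrow : ∑ k ∈ range (j + 1), hermiteDoubleTerm c y j k =
      poch (c + 1 / 2 + j) j * (-y) ^ j / (poch c j * j !) := by
    simp_rw [hterm, ← sum_mul]
    rw [hvandermonde, div_mul_div_comm]
  rw [← hrow]
  exact hasSum_sum_of_ne_finset_zero hzero

theorem hermiteDoubleTerm_eq_choose_mul_centralBinom (c y : ℂ) (j k : ℕ) :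
    hermiteDoubleTerm c y j k =
      (2 * j + 1).choose (2 * k) * (k.centralBinom / 4 ^ k) * (k ! / poch c k) *
        ((-y) ^ j / j !) := by
  rw [hermiteDoubleTerm, Nat.descFactorial_eq_factorial_mul_choose,
    ← Nat.choose_mul_factorial_mul_factorial (Nat.le_mul_of_pos_left k two_pos),
    Nat.centralBinom_eq_two_mul_choose, two_mul, Nat.add_sub_cancel]
  push_cast
  field

theorem norm_hermiteDoubleTerm_le {c : ℂ} {C : ℝ}
    (hC : ∀ k, ‖(k ! : ℂ) / poch c k‖ ≤ C * 2 ^ k) (y : ℂ) (j k : ℕ) :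
    ‖hermiteDoubleTerm c y j k‖ ≤ 2 * C * ((16 * ‖y‖) ^ j / j ! * (1 / 2) ^ k) := by
  have hC0 : 0 ≤ C := by simpa using (norm_nonneg _).trans (hC 0)
  rcases lt_or_ge j k with hjk | hkj
  · rw [hermiteDoubleTerm, Nat.descFactorial_of_lt (by lia)]
    simp only [Nat.cast_zero, zero_div, zero_mul, norm_zero]
    positivity
  have hchoose : ((2 * j + 1).choose (2 * k) : ℝ) ≤ 2 * 4 ^ j := by
    exact_mod_cast (Nat.choose_le_two_pow _ _).trans_eq
      (show 2 ^ (2 * j + 1) = 2 * 4 ^ j by rw [pow_succ', pow_mul]; norm_num)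
  have hcentral : (k.centralBinom : ℝ) / 4 ^ k ≤ 1 := by
    rw [div_le_one (by positivity)]
    exact_mod_cast (Nat.choose_le_two_pow _ _).trans_eq (pow_mul 2 2 k)
  have hpow : (2 : ℝ) ^ k ≤ 4 ^ j * (1 / 2) ^ k := by
    rw [one_div, inv_pow, ← div_eq_mul_inv, le_div_iff₀ (by positivity), ← mul_pow,
      show (2 * 2 : ℝ) = 4 by norm_num]
    exact pow_le_pow_right₀ (by norm_num) hkj
  calc
    ‖hermiteDoubleTerm c y j k‖ = (2 * j + 1).choose (2 * k) * (k.centralBinom / 4 ^ k) *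
        ‖(k ! : ℂ) / poch c k‖ * (‖y‖ ^ j / j !) := by
      rw [hermiteDoubleTerm_eq_choose_mul_centralBinom]
      simp
    _ ≤ 2 * 4 ^ j * 1 * (C * 2 ^ k) * (‖y‖ ^ j / j !) := by
      gcongr
      exact hC k
    _ ≤ 2 * 4 ^ j * 1 * (C * (4 ^ j * (1 / 2) ^ k)) * (‖y‖ ^ j / j !) := by gcongr
    _ = 2 * C * ((16 * ‖y‖) ^ j / j ! * (1 / 2) ^ k) := by
      rw [mul_pow, show (16 : ℝ) = 4 * 4 by norm_num, mul_pow]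
      ring

theorem summable_hermiteDoubleTerm {c : ℂ} (hc : ∀ n : ℕ, c ≠ -n) (y : ℂ) :
    Summable fun p : ℕ × ℕ => hermiteDoubleTerm c y p.1 p.2 := by
  obtain ⟨C, hC⟩ := exists_norm_factorial_div_ascPochhammer_le hc
  have hmajorant : Summable fun p : ℕ × ℕ => (16 * ‖y‖) ^ p.1 / p.1 ! * (1 / 2 : ℝ) ^ p.2 :=
    (Real.summable_pow_div_factorial _).mul_of_nonneg summable_geometric_two
      (fun _ => by positivity) fun _ => by positivity
  exact .of_norm_bounded (hmajorant.mul_left (2 * C)) fun p =>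
    norm_hermiteDoubleTerm_le hC y p.1 p.2

theorem hermite_odd_series_general (x : ℝ) (a : ℂ) (ha3 : ∀ n : ℕ, a + 3 / 2 ≠ -(n : ℂ)) :
    HasSum (fun k : ℕ => (((x / 4) ^ (2 * k) * physHermite (2 * k + 1) (x / 2) : ℝ) : ℂ) /
        (poch (a + 3 / 2) k * (Nat.factorial k : ℂ)))
      (x * Complex.exp (x ^ 2 / 4) * ∑' k : ℕ, poch (a + 2 + k) k * (-(x ^ 2 / 4)) ^ k /
        (poch (a + 3 / 2) k * (Nat.factorial k : ℂ))) := by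
  have hdouble := (summable_hermiteDoubleTerm ha3 (x ^ 2 / 4)).hasSum
  have hrows := (hdouble.prod_fiberwise
    (hasSum_hermiteDoubleTerm_snd ha3 (x ^ 2 / 4))).tsum_eq
  rw [show a + 3 / 2 + 1 / 2 = a + 2 by ring] at hrows
  rw [hrows]
  exact ((Equiv.prodComm ℕ ℕ).hasSum_iff.2
    (hdouble.mul_left (x * Complex.exp (x ^ 2 / 4)))).prod_fiberwise
      (hasSum_mul_hermiteDoubleTerm_fst (a + 3 / 2) x)

end Hermite

/-- Odd Hermite series in closed ₂F₂-form:
`Σ_k (x/4)^{2k} H_{2k+1}(x/2)/((a+3/2)_k k!)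
  = x e^{x²/4} ₂F₂(a/2+1, a/2+3/2; a+3/2, a+2; -x²)`. -/
theorem hermite_odd_series
    (x : ℝ) (a : ℂ)
    (ha3 : ∀ n : ℕ, a + 3 / 2 ≠ -(n : ℂ))
    (ha2 : ∀ n : ℕ, a + 2 ≠ -(n : ℂ)) :
    ∑' k : ℕ, (((x / 4) ^ (2 * k) * physHermite (2 * k + 1) (x / 2) : ℝ) : ℂ) /
        (poch (a + 3 / 2) k * (Nat.factorial k : ℂ))
      = (x : ℂ) * Complex.exp ((x : ℂ) ^ 2 / 4) *
          ∑' k : ℕ, poch (a / 2 + 1) k * poch (a / 2 + 3 / 2) k * (-(x : ℂ) ^ 2) ^ k /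
            (poch (a + 3 / 2) k * poch (a + 2) k * (Nat.factorial k : ℂ)) := by
  rw [(hermite_odd_series_general x a ha3).tsum_eq]
  simp only [poch_add_mul_neg_div_four_pow_div ha2]
end

section
/- Let r be a positive integer, m_1, …, m_r positive integers with m := m_1 + ⋯ + m_r, and let a, b, c, d_1, …, d_r be complex numbers with Re(c − a − b) > m, such that c is not a nonpositive integer or zero, c − a, c − b are not nonpositive integers or zero, each d_i is not a nonpositive integer or zero, and 1 + a + b − c is such that (1+a+b−c)_k ≠ 0 for 0 ≤ k ≤ m. Define C_k := ((−1)^k / k!) · Σ_{j=0}^k (−k)_j ∏_{i=1}^r (d_i+m_i)_j / (∏_{i=1}^r (d_i)_j · j!) for 0 ≤ k ≤ m. Then Σ_{k=0}^∞ (a)_k (b)_k ∏_{i=1}^r (d_i+m_i)_k / ((c)_k ∏_{i=1}^r (d_i)_k · k!) = [Γ(c) Γ(c−a−b) / (Γ(c−a) Γ(c−b))] · Σ_{k=0}^m (−1)^k (a)_k (b)_k C_k / (1+a+b−c)_k. -/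
/-!
Each factor `(d_i + m_i)_n / (d_i)_n = (d_i + n)_{m_i} / (d_i)_{m_i}` is a polynomial in `n` of
degree `m_i`, so the series is that of `₂F₁(a, b; c; 1)` weighted by a polynomial of degree `m`.
Expand this weight in the basis `n.choose k`, `k ≤ m`: its coefficients are iterated forward
differences at `0`, which are the `C_k` up to a factor `k!`. The weight `n.choose k` shifts the
index by `k` and turns the series into a Gauss series with parameters `a + k`, `b + k`, `c + k`.

Gauss's theorem itself comes from the contiguous relation between the series at `c` and at `c + 1`,
whose terms telescope. Iterated `N` times, it expresses the series at `c` through the series at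
`c + N`, which tends to `1`, with quotients of Pochhammer symbols as coefficients; Euler's limit
formula for `1 / Γ` evaluates their limit.
-/

open Asymptotics Complex Filter Finset Polynomial Topology
open scoped Nat fwdDiff

section Pochhammer

theorem poch_zero (a : ℂ) : poch a 0 = 1 := by simp [poch]

theorem poch_succ (a : ℂ) (n : ℕ) : poch a (n + 1) = poch a n * (a + n) := by
  simp [poch, ascPochhammer_succ_eval]

theorem poch_add (a : ℂ) (k n : ℕ) : poch a (k + n) = poch a k * poch (a + k) n := by
  simp [poch, ← ascPochhammer_mul ℂ k n]

theorem mul_poch_add_one (a : ℂ) (n : ℕ) : a * poch (a + 1) n = poch a n * (a + n) := by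
  simpa [poch_zero, poch_succ] using (poch_add a 1 n).symm.trans (add_comm 1 n ▸ poch_succ a n)

theorem poch_eq_prod_range (a : ℂ) (n : ℕ) : poch a n = ∏ j ∈ range n, (a + j) := by
  induction n with
  | zero => simp [poch_zero]
  | succ n ih => rw [poch_succ, prod_range_succ, ih]

theorem poch_one (n : ℕ) : poch 1 n = n ! := ascPochhammer_eval_one ℂ n

theorem poch_neg_natCast (k j : ℕ) : poch (-k) j = (-1) ^ j * k.descFactorial j := by
  rw [poch, ascPochhammer_eval_neg_eq_descPochhammer, descPochhammer_eval_eq_descFactorial]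

theorem poch_sub_natCast (s : ℂ) (k : ℕ) : poch (s - k) k = (-1) ^ k * poch (1 - s) k := by
  rw [← neg_sub, poch, ascPochhammer_eval_neg_eq_descPochhammer,
    descPochhammer_eval_eq_ascPochhammer, poch]
  ring_nf

theorem poch_ne_zero_s16 {a : ℂ} (ha : ∀ n : ℕ, a ≠ -n) (n : ℕ) : poch a n ≠ 0 := by
  rw [poch_eq_prod_range, prod_ne_zero_iff]
  exact fun j _ h ↦ ha j (eq_neg_of_add_eq_zero_left h)

theorem add_natCast_ne_neg_natCast {a : ℂ} (ha : ∀ n : ℕ, a ≠ -n) (k n : ℕ) :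
    a + k ≠ -n := fun h ↦ ha (n + k) (by push_cast; linear_combination h)

theorem ne_neg_natCast_of_re_pos {a : ℂ} (ha : 0 < a.re) (n : ℕ) : a ≠ -n := by
  rintro rfl
  have : (0 : ℝ) ≤ n := n.cast_nonneg
  simp only [neg_re, natCast_re] at ha
  linarith

theorem norm_poch_le_norm_poch_add_natCast {a : ℂ} (ha : 0 ≤ a.re) (N n : ℕ) :
    ‖poch a n‖ ≤ ‖poch (a + N) n‖ := by
  simp only [poch_eq_prod_range, norm_prod]
  refine prod_le_prod (fun _ _ ↦ norm_nonneg _) fun j _ ↦ ?_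
  simp only [Complex.norm_def, normSq_apply, add_re, natCast_re, add_im, natCast_im]
  gcongr √((?_ + _) * (?_ + _) + ?_) <;> simp

theorem tendsto_inv_poch_add_natCast (a : ℂ) {n : ℕ} (hn : n ≠ 0) :
    Tendsto (fun N : ℕ ↦ (poch (a + N) n)⁻¹) atTop (𝓝 0) := by
  have hdeg : 0 < (ascPochhammer ℂ n).degree :=
    natDegree_pos_iff_degree_pos.1 (by rw [ascPochhammer_natDegree]; lia)
  have harg : Tendsto (fun N : ℕ ↦ ‖a + N‖) atTop atTop :=
    tendsto_norm_atTop_iff_cobounded.2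
      ((tendsto_const_add_cobounded a).comp tendsto_natCast_atTop_cobounded)
  exact tendsto_inv₀_cobounded.comp
    (tendsto_norm_atTop_iff_cobounded.1 (tendsto_norm_atTop _ hdeg harg))

end Pochhammer

section Gamma

/-- Euler's limit formula for the entire function `1 / Γ`, whose value `0` at the poles of `Γ`
is also the value of `(Gamma s)⁻¹` in Mathlib. -/
theorem tendsto_poch_succ_div (s : ℂ) :
    Tendsto (fun n : ℕ ↦ poch s (n + 1) / ((n : ℂ) ^ s * n !)) atTop (𝓝 (Gamma s)⁻¹) := by
  have hseq (n : ℕ) : poch s (n + 1) / ((n : ℂ) ^ s * n !) = (GammaSeq s n)⁻¹ := by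
    rw [GammaSeq, inv_div, poch_eq_prod_range]
  simp only [hseq]
  by_cases hs : ∀ m : ℕ, s ≠ -m
  · exact (GammaSeq_tendsto_Gamma s).inv₀ (Gamma_ne_zero hs)
  · obtain ⟨m, rfl⟩ : ∃ m : ℕ, s = -m := by simpa using hs
    rw [Gamma_neg_nat_eq_zero, inv_zero]
    refine tendsto_const_nhds.congr' ?_
    filter_upwards [eventually_ge_atTop m] with n hn
    rw [← hseq, poch, ascPochhammer_eval_neg_coe_nat_of_lt (by lia), zero_div]

theorem Gamma_add_natCast {s : ℂ} (hs : ∀ n : ℕ, s ≠ -n) (k : ℕ) :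
    Gamma (s + k) = poch s k * Gamma s := by
  rw [poch, ← Gamma_add_nat_div_Gamma_eq s hs, div_mul_cancel₀ _ (Gamma_ne_zero hs)]

theorem Gamma_sub_natCast {s : ℂ} {k : ℕ} (hs : k < s.re) :
    Gamma (s - k) = (-1) ^ k * Gamma s / poch (1 - s) k := by
  have hk := ne_neg_natCast_of_re_pos (a := s - k) (by simpa using hs)
  have hrefl := poch_sub_natCast s k
  have hne : poch (1 - s) k ≠ 0 := right_ne_zero_of_mul (hrefl ▸ poch_ne_zero_s16 hk k)
  have hGamma := Gamma_add_natCast hk k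
  rw [sub_add_cancel, hrefl] at hGamma
  rw [hGamma, ← mul_assoc, ← mul_assoc, ← mul_pow, neg_one_mul, neg_neg, one_pow, one_mul,
    mul_div_cancel_left₀ _ hne]

end Gamma

section GaussSeries

theorem ordinaryHypergeometricCoefficient_eq_poch (a b c : ℂ) (n : ℕ) :
    ordinaryHypergeometricCoefficient a b c n = poch a n * poch b n / (poch c n * n !) := by
  simp only [ordinaryHypergeometricCoefficient, poch]
  ring

variable {a b c : ℂ}

theorem tendsto_ordinaryHypergeometricCoefficient_succ_div_cpow (hc : ∀ n : ℕ, c ≠ -n) :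
    Tendsto (fun n : ℕ ↦ ordinaryHypergeometricCoefficient a b c (n + 1) /
        (n : ℂ) ^ (a + b - c - 1)) atTop (𝓝 (Gamma c / (Gamma a * Gamma b))) := by
  have hlim := ((tendsto_poch_succ_div a).mul (tendsto_poch_succ_div b)).div
    ((tendsto_poch_succ_div c).mul (tendsto_poch_succ_div 1))
    (by simpa using Gamma_ne_zero hc)
  convert! hlim.congr' ?_ using 2
  · rw [Gamma_one, inv_one, mul_one, div_inv_eq_mul, ← mul_inv, ← div_eq_inv_mul]
  filter_upwards [eventually_ne_atTop 0] with n hn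
  have hn' : (n : ℂ) ≠ 0 := mod_cast hn
  have hcpow (s : ℂ) : (n : ℂ) ^ s ≠ 0 := by simp [cpow_eq_zero_iff, hn]
  have hfact : (n ! : ℂ) ≠ 0 := mod_cast n.factorial_ne_zero
  have := poch_ne_zero_s16 hc (n + 1)
  have := hcpow a
  have := hcpow b
  have := hcpow c
  rw [Pi.div_apply, ordinaryHypergeometricCoefficient_eq_poch, ← poch_one (n + 1),
    cpow_sub _ _ hn', cpow_sub _ _ hn', cpow_add _ _ hn', cpow_one]
  field_simp

theorem isBigO_ordinaryHypergeometricCoefficient_succ (hc : ∀ n : ℕ, c ≠ -n) :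
    (fun n : ℕ ↦ ordinaryHypergeometricCoefficient a b c (n + 1)) =O[atTop]
      fun n : ℕ ↦ (n : ℝ) ^ (-((c - a - b).re + 1)) := by
  have hcpow : (fun n : ℕ ↦ (n : ℂ) ^ (a + b - c - 1)) =O[atTop]
      fun n : ℕ ↦ (n : ℝ) ^ (-((c - a - b).re + 1)) := by
    refine .of_norm_eventuallyLE ?_
    filter_upwards [eventually_gt_atTop 0] with n hn
    rw [norm_natCast_cpow_of_pos hn]
    simp only [sub_re, add_re, one_re]
    ring_nf
    rfl
  refine (isBigO_of_div_tendsto_nhds ?_ _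
    (tendsto_ordinaryHypergeometricCoefficient_succ_div_cpow hc)).trans hcpow
  filter_upwards [eventually_ne_atTop 0] with n hn h
  simp [cpow_eq_zero_iff, hn] at h

theorem summable_ordinaryHypergeometricCoefficient (hc : ∀ n : ℕ, c ≠ -n)
    (hre : 0 < (c - a - b).re) : Summable (ordinaryHypergeometricCoefficient a b c) := by
  rw [← summable_nat_add_iff 1]
  refine summable_of_isBigO_nat (Real.summable_nat_rpow.2 ?_)
    (isBigO_ordinaryHypergeometricCoefficient_succ hc)
  linarith

theorem tendsto_ordinaryHypergeometricCoefficient_zero (hc : ∀ n : ℕ, c ≠ -n)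
    (hre : -1 < (c - a - b).re) :
    Tendsto (ordinaryHypergeometricCoefficient a b c) atTop (𝓝 0) := by
  rw [← tendsto_add_atTop_iff_nat 1]
  refine (isBigO_ordinaryHypergeometricCoefficient_succ hc).trans_tendsto ?_
  exact (tendsto_rpow_neg_atTop (by linarith)).comp tendsto_natCast_atTop_atTop

theorem ordinaryHypergeometricCoefficient_add_mul_choose (hc : ∀ n : ℕ, c ≠ -n) (n k : ℕ) :
    ordinaryHypergeometricCoefficient a b c (n + k) * (n + k).choose k =
      poch a k * poch b k / (poch c k * k !) *
        ordinaryHypergeometricCoefficient (a + k) (b + k) (c + k) n := by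
  have hfact : ((n + k)! : ℂ) = (n + k).choose k * n ! * k ! := by
    have := Nat.add_choose_mul_factorial_mul_factorial n k
    exact_mod_cast this.symm
  have hchoose : ((n + k).choose k : ℂ) ≠ 0 := mod_cast (Nat.choose_pos (by lia)).ne'
  have hck := poch_ne_zero_s16 hc k
  have hcn := poch_ne_zero_s16 (add_natCast_ne_neg_natCast hc k) n
  have hn : (n ! : ℂ) ≠ 0 := mod_cast n.factorial_ne_zero
  have hk : (k ! : ℂ) ≠ 0 := mod_cast k.factorial_ne_zero
  simp only [ordinaryHypergeometricCoefficient_eq_poch, hfact]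
  simp only [add_comm n k, poch_add]
  rw [add_comm n k] at hchoose
  field_simp

theorem tendsto_natCast_mul_ordinaryHypergeometricCoefficient (hc : ∀ n : ℕ, c ≠ -n)
    (hre : 0 < (c - a - b).re) :
    Tendsto (fun n : ℕ ↦ n * ordinaryHypergeometricCoefficient a b c n) atTop (𝓝 0) := by
  rw [← tendsto_add_atTop_iff_nat 1]
  have hshift := tendsto_ordinaryHypergeometricCoefficient_zero (a := a + (1 : ℕ))
    (b := b + (1 : ℕ)) (add_natCast_ne_neg_natCast hc 1) (by
      simp only [sub_re, add_re, Nat.cast_one, one_re] at hre ⊢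
      linarith)
  have h := hshift.const_mul (poch a 1 * poch b 1 / (poch c 1 * (1 : ℕ)!))
  rw [mul_zero] at h
  refine h.congr fun n ↦ ?_
  rw [← ordinaryHypergeometricCoefficient_add_mul_choose hc, Nat.choose_one_right, mul_comm]

theorem ordinaryHypergeometricCoefficient_contiguous (hc : ∀ n : ℕ, c ≠ -n) (n : ℕ) :
    c * (c - a - b) * ordinaryHypergeometricCoefficient a b c n -
        (c - a) * (c - b) * ordinaryHypergeometricCoefficient a b (c + 1) n =
      c * (n * ordinaryHypergeometricCoefficient a b c n) -
        c * ((n + 1 : ℕ) * ordinaryHypergeometricCoefficient a b c (n + 1)) := by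
  have hcn : c + n ≠ 0 := fun h ↦ hc n (eq_neg_of_add_eq_zero_left h)
  have hraise : ordinaryHypergeometricCoefficient a b (c + 1) n =
      ordinaryHypergeometricCoefficient a b c n * (c / (c + n)) := by
    have hpoch := mul_poch_add_one c n
    have hn := poch_ne_zero_s16 hc n
    have hfact : (n ! : ℂ) ≠ 0 := mod_cast n.factorial_ne_zero
    have hn' : poch (c + 1) n ≠ 0 := right_ne_zero_of_mul (hpoch ▸ mul_ne_zero hn hcn)
    simp only [ordinaryHypergeometricCoefficient_eq_poch]
    field_simp
    linear_combination -poch a n * poch b n * hpoch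
  have hsucc : (n + 1 : ℕ) * ordinaryHypergeometricCoefficient a b c (n + 1) =
      ordinaryHypergeometricCoefficient a b c n * ((a + n) * (b + n) / (c + n)) := by
    have hn := poch_ne_zero_s16 hc n
    have hn1 : (n : ℂ) + 1 ≠ 0 := n.cast_add_one_ne_zero
    simp only [ordinaryHypergeometricCoefficient_eq_poch, poch_succ, Nat.factorial_succ,
      Nat.cast_mul, Nat.cast_succ]
    field_simp
  rw [hraise, hsucc]
  field_simp
  ring

theorem tsum_ordinaryHypergeometricCoefficient_contiguous (hc : ∀ n : ℕ, c ≠ -n)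
    (hre : 0 < (c - a - b).re) :
    c * (c - a - b) * ∑' n, ordinaryHypergeometricCoefficient a b c n =
      (c - a) * (c - b) * ∑' n, ordinaryHypergeometricCoefficient a b (c + 1) n := by
  have hc1 : ∀ n : ℕ, c + 1 ≠ -n := mod_cast add_natCast_ne_neg_natCast hc 1
  have hsum := (summable_ordinaryHypergeometricCoefficient hc hre).hasSum.mul_left (c * (c - a - b))
  have hsum1 := (summable_ordinaryHypergeometricCoefficient (a := a) (b := b) hc1
    (by simp only [sub_re, add_re, one_re] at hre ⊢; linarith)).hasSum.mul_left
      ((c - a) * (c - b))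
  have hlim := (hsum.sub hsum1).tendsto_sum_nat
  simp only [ordinaryHypergeometricCoefficient_contiguous hc, sum_range_sub',
    Nat.cast_zero, zero_mul, mul_zero, zero_sub] at hlim
  have hzero :=
    ((tendsto_natCast_mul_ordinaryHypergeometricCoefficient hc hre).const_mul c).neg
  rw [mul_zero, neg_zero] at hzero
  exact sub_eq_zero.1 (tendsto_nhds_unique hlim hzero)

theorem poch_mul_tsum_ordinaryHypergeometricCoefficient (hc : ∀ n : ℕ, c ≠ -n)
    (hre : 0 < (c - a - b).re) (N : ℕ) :
    poch c N * poch (c - a - b) N * ∑' n, ordinaryHypergeometricCoefficient a b c n =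
      poch (c - a) N * poch (c - b) N *
        ∑' n, ordinaryHypergeometricCoefficient a b (c + N) n := by
  induction N with
  | zero => simp [poch_zero]
  | succ N ih =>
    have hstep := tsum_ordinaryHypergeometricCoefficient_contiguous (a := a) (b := b)
      (add_natCast_ne_neg_natCast hc N)
      (by simp only [sub_re, add_re, natCast_re] at hre ⊢; linarith [N.cast_nonneg (α := ℝ)])
    rw [Nat.cast_succ, ← add_assoc]
    simp only [poch_succ]
    linear_combination
      (c + N) * (c - a - b + N) * ih + poch (c - a) N * poch (c - b) N * hstep

theorem tendsto_ordinaryHypergeometricCoefficient_add_natCast (a b c : ℂ) (n : ℕ) :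
    Tendsto (fun N : ℕ ↦ ordinaryHypergeometricCoefficient a b (c + N) n) atTop
      (𝓝 (Pi.single (M := fun _ ↦ ℂ) 0 1 n)) := by
  rcases eq_or_ne n 0 with rfl | hn
  · simp [ordinaryHypergeometricCoefficient_eq_poch, poch_zero]
  · have h := (tendsto_inv_poch_add_natCast c hn).const_mul (poch a n * poch b n / n !)
    rw [mul_zero] at h
    rw [Pi.single_eq_of_ne hn]
    refine h.congr fun N ↦ ?_
    rw [ordinaryHypergeometricCoefficient_eq_poch]
    ring

theorem norm_ordinaryHypergeometricCoefficient_add_natCast_le (a b : ℂ) (hc : 0 < c.re)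
    (N n : ℕ) :
    ‖ordinaryHypergeometricCoefficient a b (c + N) n‖ ≤
      ‖ordinaryHypergeometricCoefficient a b c n‖ := by
  have hpos : 0 < ‖poch c n‖ := norm_pos_iff.2 (poch_ne_zero_s16 (ne_neg_natCast_of_re_pos hc) n)
  have hfact : 0 < ‖(n ! : ℂ)‖ := norm_pos_iff.2 (mod_cast n.factorial_ne_zero)
  simp only [ordinaryHypergeometricCoefficient_eq_poch, norm_div, norm_mul]
  gcongr
  exact norm_poch_le_norm_poch_add_natCast hc.le N n

theorem tendsto_tsum_ordinaryHypergeometricCoefficient_add_natCast (a b c : ℂ) :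
    Tendsto (fun N : ℕ ↦ ∑' n, ordinaryHypergeometricCoefficient a b (c + N) n) atTop (𝓝 1) := by
  obtain ⟨M, hM⟩ := exists_nat_gt (max (-c.re) (-(c - a - b).re))
  obtain ⟨hMc, hMre⟩ := max_lt_iff.1 hM
  have hpos : 0 < (c + M).re := by rw [add_re, natCast_re]; linarith
  have hpos' : 0 < (c + M - a - b).re := by
    simp only [sub_re, add_re, natCast_re] at hMre ⊢
    linarith
  rw [← tendsto_add_atTop_iff_nat M, ← tsum_pi_single 0 (1 : ℂ)]
  refine tendsto_tsum_of_dominated_convergence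
    (summable_ordinaryHypergeometricCoefficient (ne_neg_natCast_of_re_pos hpos) hpos').norm
    (fun n ↦ (tendsto_add_atTop_iff_nat M).2
      (tendsto_ordinaryHypergeometricCoefficient_add_natCast a b c n))
    (.of_forall fun N n ↦ ?_)
  rw [Nat.cast_add, add_comm (N : ℂ), ← add_assoc]
  exact norm_ordinaryHypergeometricCoefficient_add_natCast_le a b hpos N n

/-- Gauss's summation theorem. When `c - a` or `c - b` is a pole of `Γ`, the sum is `0`, and so is
the right-hand side, because Mathlib's `Gamma` takes the value `0` at the poles. -/
theorem hasSum_ordinaryHypergeometricCoefficient (hc : ∀ n : ℕ, c ≠ -n)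
    (hre : 0 < (c - a - b).re) :
    HasSum (ordinaryHypergeometricCoefficient a b c)
      (Gamma c * Gamma (c - a - b) / (Gamma (c - a) * Gamma (c - b))) := by
  set S := ∑' n, ordinaryHypergeometricCoefficient a b c n
  have hleft := ((tendsto_poch_succ_div c).mul (tendsto_poch_succ_div (c - a - b))).mul_const S
  have hright := ((tendsto_poch_succ_div (c - a)).mul (tendsto_poch_succ_div (c - b))).mul
    ((tendsto_add_atTop_iff_nat 1).2
      (tendsto_tsum_ordinaryHypergeometricCoefficient_add_natCast a b c))
  have hlim : (Gamma c)⁻¹ * (Gamma (c - a - b))⁻¹ * S =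
      (Gamma (c - a))⁻¹ * (Gamma (c - b))⁻¹ * 1 := by
    refine tendsto_nhds_unique_of_eventuallyEq hleft hright ?_
    filter_upwards [eventually_ne_atTop 0] with n hn
    have hn' : (n : ℂ) ≠ 0 := mod_cast hn
    have hcpow : (n : ℂ) ^ c * (n : ℂ) ^ (c - a - b) = (n : ℂ) ^ (c - a) * (n : ℂ) ^ (c - b) := by
      rw [← cpow_add _ _ hn', ← cpow_add _ _ hn']
      ring_nf
    have hden : (n : ℂ) ^ c * n ! * ((n : ℂ) ^ (c - a - b) * n !) =
        (n : ℂ) ^ (c - a) * n ! * ((n : ℂ) ^ (c - b) * n !) := by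
      linear_combination (n ! : ℂ) ^ 2 * hcpow
    rw [div_mul_div_comm, div_mul_div_comm, div_mul_eq_mul_div, div_mul_eq_mul_div, hden,
      poch_mul_tsum_ordinaryHypergeometricCoefficient hc hre]
  have hΓc := Gamma_ne_zero hc
  have hΓ := Gamma_ne_zero (ne_neg_natCast_of_re_pos hre)
  have hval : S = Gamma c * Gamma (c - a - b) / (Gamma (c - a) * Gamma (c - b)) := by
    rw [div_eq_mul_inv, mul_inv, ← mul_one (_⁻¹ * _), ← hlim]
    field_simp
  exact hval ▸ (summable_ordinaryHypergeometricCoefficient hc hre).hasSum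

theorem hasSum_ordinaryHypergeometricCoefficient_mul_choose {k : ℕ} (hc : ∀ n : ℕ, c ≠ -n)
    (hre : k < (c - a - b).re) :
    HasSum (fun n : ℕ ↦ ordinaryHypergeometricCoefficient a b c n * n.choose k)
      (Gamma c * Gamma (c - a - b) / (Gamma (c - a) * Gamma (c - b)) *
        ((-1) ^ k * poch a k * poch b k / (k ! * poch (1 + a + b - c) k))) := by
  have hfirst : ∑ n ∈ range k, ordinaryHypergeometricCoefficient a b c n * n.choose k = 0 :=
    sum_eq_zero fun n hn ↦ by simp [Nat.choose_eq_zero_of_lt (mem_range.1 hn)]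
  have hgauss := hasSum_ordinaryHypergeometricCoefficient (a := a + k) (b := b + k)
    (add_natCast_ne_neg_natCast hc k)
    (by simp only [sub_re, add_re, natCast_re] at hre ⊢; linarith)
  rw [← hasSum_nat_add_iff' k, hfirst, sub_zero]
  simp only [ordinaryHypergeometricCoefficient_add_mul_choose hc]
  convert! hgauss.mul_left (poch a k * poch b k / (poch c k * k !)) using 1
  have hck := poch_ne_zero_s16 hc k
  rw [show c + k - (a + k) - (b + k) = c - a - b - k by ring, add_sub_add_right_eq_sub,
    add_sub_add_right_eq_sub, Gamma_add_natCast hc, Gamma_sub_natCast hre,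
    show 1 - (c - a - b) = 1 + a + b - c by ring]
  field_simp

end GaussSeries

section Newton

theorem eval_natCast_eq_sum_choose_mul_fwdDiff_iter {R : Type*} [CommRing R] {P : R[X]}
    {m : ℕ} (hP : P.natDegree ≤ m) (n : ℕ) :
    P.eval (n : R) = ∑ k ∈ range (m + 1), n.choose k * (Δ_[1])^[k] P.eval 0 := by
  have hshift := shift_eq_sum_fwdDiff_iter (1 : R) P.eval n 0
  simp only [zero_add, nsmul_eq_mul, mul_one] at hshift
  rw [hshift]
  refine sum_congr_of_eq_on_inter (fun k _ hk ↦ ?_) (fun k _ hk ↦ ?_) fun _ _ _ ↦ rfl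
  · rw [mem_range, not_lt] at hk
    rw [fwdDiff_iter_eq_zero_of_degree_lt (by lia), Pi.zero_apply, mul_zero]
  · rw [mem_range, not_lt] at hk
    rw [Nat.choose_eq_zero_of_lt (by lia), Nat.cast_zero, zero_mul]

theorem fwdDiff_iter_zero_eq_sum_poch (f : ℂ → ℂ) (k : ℕ) :
    (Δ_[1])^[k] f 0 = (-1) ^ k * ∑ j ∈ range (k + 1), poch (-k) j * f j / j ! := by
  rw [fwdDiff_iter_eq_sum_shift, mul_sum]
  refine sum_congr rfl fun j hj ↦ ?_
  have hsign : (-1 : ℂ) ^ k * (-1) ^ j = (-1) ^ (k - j) := by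
    rw [← pow_add, show k + j = k - j + 2 * j by grind, pow_add, pow_mul, neg_one_sq, one_pow,
      mul_one]
  have hfact : (j ! : ℂ) ≠ 0 := mod_cast j.factorial_ne_zero
  rw [poch_neg_natCast, Nat.descFactorial_eq_factorial_mul_choose, zsmul_eq_mul]
  push_cast
  rw [← hsign, zero_add, nsmul_one]
  field_simp

end Newton

section PolynomialWeight

theorem hasSum_ordinaryHypergeometricCoefficient_mul_eval {a b c : ℂ} {P : ℂ[X]} {m : ℕ}
    (hP : P.natDegree ≤ m) (hc : ∀ n : ℕ, c ≠ -n) (hre : m < (c - a - b).re) :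
    HasSum (fun n : ℕ ↦ ordinaryHypergeometricCoefficient a b c n * P.eval (n : ℂ))
      (Gamma c * Gamma (c - a - b) / (Gamma (c - a) * Gamma (c - b)) *
        ∑ k ∈ range (m + 1),
          (-1) ^ k * poch a k * poch b k * ((Δ_[1])^[k] P.eval 0 / k !) /
            poch (1 + a + b - c) k) := by
  have hterm (k) (hk : k ∈ range (m + 1)) :=
    (hasSum_ordinaryHypergeometricCoefficient_mul_choose hc
      (hre.trans_le' (mod_cast mem_range_succ_iff.1 hk))).mul_right ((Δ_[1])^[k] P.eval 0)
  convert! hasSum_sum hterm using 1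
  · ext n
    simp only [eval_natCast_eq_sum_choose_mul_fwdDiff_iter hP, mul_sum, mul_assoc]
  · rw [mul_sum]
    refine sum_congr rfl fun k _ ↦ ?_
    ring

theorem poch_add_natCast_div_poch {d : ℂ} (hd : ∀ n : ℕ, d ≠ -n) (m n : ℕ) :
    poch (d + m) n / poch d n = (poch d m)⁻¹ * poch (d + n) m := by
  have hn := poch_ne_zero_s16 hd n
  have hm := poch_ne_zero_s16 hd m
  field_simp
  rw [mul_comm, ← poch_add, ← poch_add, add_comm]

theorem exists_polynomial_eval_eq_prod_poch_div {ι : Type*} [Fintype ι] {d : ι → ℂ}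
    (hd : ∀ i, ∀ n : ℕ, d i ≠ -n) (m : ι → ℕ) :
    ∃ P : ℂ[X], P.natDegree ≤ ∑ i, m i ∧
      ∀ n : ℕ, P.eval (n : ℂ) = (∏ i, poch (d i + m i) n) / ∏ i, poch (d i) n := by
  refine ⟨∏ i, C (poch (d i) (m i))⁻¹ * (ascPochhammer ℂ (m i)).comp (X + C (d i)), ?_,
    fun n ↦ ?_⟩
  · refine (natDegree_prod_le _ _).trans (sum_le_sum fun i _ ↦ ?_)
    refine (natDegree_C_mul_le _ _).trans_eq ?_
    rw [natDegree_comp, ascPochhammer_natDegree, natDegree_X_add_C, mul_one]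
  · rw [eval_prod, ← prod_div_distrib]
    refine prod_congr rfl fun i _ ↦ ?_
    rw [poch_add_natCast_div_poch (hd i)]
    simp [poch, add_comm]

end PolynomialWeight

/-- The generalized Karlsson-Minton summation theorem: for `Re(c-a-b) > m`,
`₍ᵣ₊₂₎F₍ᵣ₊₁₎(a, b, (d_r+m_r); c, (d_r); 1)
  = (Γ(c)Γ(c-a-b)/(Γ(c-a)Γ(c-b))) Σ_{k=0}^m (-1)^k (a)_k (b)_k C_k / (1+a+b-c)_k`,
where `C_k = ((-1)^k/k!) ₍ᵣ₊₁₎Fᵣ(-k, (d_r+m_r); (d_r); 1)`. -/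
theorem generalized_karlsson_minton
    (r : ℕ) (hr : 0 < r)
    (mv : Fin r → ℕ) (hmv : ∀ i, 0 < mv i)
    (m : ℕ) (hm : m = ∑ i, mv i)
    (a b c : ℂ) (d : Fin r → ℂ)
    (hre : (c - a - b).re > (m : ℝ))
    (hc : ∀ n : ℕ, c ≠ -(n : ℂ))
    (hca : ∀ n : ℕ, c - a ≠ -(n : ℂ))
    (hcb : ∀ n : ℕ, c - b ≠ -(n : ℂ))
    (hd : ∀ i, ∀ n : ℕ, d i ≠ -(n : ℂ))
    (habc : ∀ k ≤ m, poch (1 + a + b - c) k ≠ 0)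
    (C : ℕ → ℂ)
    (hC : ∀ k ≤ m, C k = ((-1 : ℂ) ^ k / (Nat.factorial k : ℂ)) *
      ∑ j ∈ Finset.range (k + 1), poch (-(k : ℂ)) j * (∏ i, poch (d i + (mv i : ℂ)) j) /
        ((∏ i, poch (d i) j) * (Nat.factorial j : ℂ))) :
    ∑' k : ℕ, poch a k * poch b k * (∏ i, poch (d i + (mv i : ℂ)) k) /
        (poch c k * (∏ i, poch (d i) k) * (Nat.factorial k : ℂ))
      = (Complex.Gamma c * Complex.Gamma (c - a - b) /
          (Complex.Gamma (c - a) * Complex.Gamma (c - b))) *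
        ∑ k ∈ Finset.range (m + 1),
          (-1 : ℂ) ^ k * poch a k * poch b k * C k / poch (1 + a + b - c) k := by
  obtain ⟨P, hdeg, hP⟩ := exists_polynomial_eval_eq_prod_poch_div hd mv
  have hcoeff (k) (hk : k ∈ range (m + 1)) : (Δ_[1])^[k] P.eval 0 / k ! = C k := by
    rw [hC k (mem_range_succ_iff.1 hk), fwdDiff_iter_zero_eq_sum_poch, mul_div_right_comm]
    simp only [hP, mul_div_assoc, div_div]
  calc
    _ = ∑' k : ℕ, ordinaryHypergeometricCoefficient a b c k * P.eval (k : ℂ) :=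
      tsum_congr fun k ↦ by
        rw [ordinaryHypergeometricCoefficient_eq_poch, hP, div_mul_div_comm,
          mul_right_comm (poch c k)]
    _ = _ := (hasSum_ordinaryHypergeometricCoefficient_mul_eval (hm ▸ hdeg) hc hre).tsum_eq
    _ = _ := by rw [sum_congr rfl fun k hk ↦ by rw [hcoeff k hk]]
end
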